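/- arXiv:1902.05926 — 3 statements merged into one kernel-verified Lean document; each statement's English description precedes it below -/
import Mathlib

section
/- Let X be a T1 topological space with a countable basis B : ℕ → Set X. If overt choice for X (with respect to B) is continuous, then X is quasi-Polish. -/
/-!
Send `x` to `{n | x ∈ B n}`. This embeds `X` into `ℕ → Prop`, and the work lies in showing that the
range is Π⁰₂. Let `F` realise overt choice. While a point `y` of `ℕ → Prop` is revealed, a name of a
closed set is built in finite stages (`ChoiceState`). A stage consists of a finite set `P` of past
points, a current point `x`, a finite piece `q|N` of a name, and a finite set `a` of basic
neighbourhoods of `x`. The piece `q|N` mentions only basic sets that meet `P` or are indexed by `a`,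
and it already forces `F` to choose outside `P`.

If `x'` is any point that lies in all sets indexed by `a`, then `q|N` extends to a name of the finite,
hence (T1) closed, set `P ∪ {x'}`. On this name `F` must choose `x'`, so after finitely many steps it
is committed to any prescribed finite set of neighbourhoods of `x'`, including one that omits `x`.
After that `x` can be moved to the past without the choice returning to it. This is `exists_child`.

Fix one next stage for every stage, every finite set `c` to be forced and every admissible new `a'`;
only countably many stages are then reachable. Consider the countably many Π⁰₂ conditions
"if `a ⊆ y` and `c ⊆ y`, then `a' ⊆ y` for some next stage with set `a'`". They hold for
`y = {n | x ∈ B n}` by `exists_child`. Conversely, if `y` satisfies them, it yields an infinite run of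
stages with `a ⊆ y` throughout, whose limit is a name of the closure of all points used in the run.
The point that `F` chooses there has `y` as its set of basic neighbourhoods: every element of `y` gets
forced along the run, and everything forced is eventually put into `a`, hence lies in `y`.
This is `limit_mem_range`.
-/

/-- `p` enumerates `S` if `S = {n | ∃ k, p k = n + 1}`. -/
def Enumerates (p : ℕ → ℕ) (S : Set ℕ) : Prop := S = {n | ∃ k, p k = n + 1}

/-- `B : ℕ → Set X` is a countable basis: each `B n` is open and every open set is a
union of sets `B n`. -/
def IsCountableBasis {X : Type*} [TopologicalSpace X] (B : ℕ → Set X) : Prop :=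
  (∀ n, IsOpen (B n)) ∧ ∀ U : Set X, IsOpen U → ∃ S : Set ℕ, U = ⋃ n ∈ S, B n

/-- A name of a point `x` is an enumeration of `{n | x ∈ B n}`. -/
def PointName {X : Type*} (B : ℕ → Set X) (x : X) (p : ℕ → ℕ) : Prop :=
  Enumerates p {n | x ∈ B n}

/-- A name of a closed set `A` is an enumeration of `{n | B n ∩ A ≠ ∅}`. -/
def ClosedName {X : Type*} (B : ℕ → Set X) (A : Set X) (p : ℕ → ℕ) : Prop :=
  Enumerates p {n | (B n ∩ A).Nonempty}

/-- Overt choice for `X` (w.r.t. the basis `B`) is continuous: there is a function `F`,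
continuous on the set of names of nonempty closed subsets of `X`, mapping any name of a
nonempty closed set `A` to a name of some point of `A`. -/
def OvertChoiceContinuous {X : Type*} [TopologicalSpace X] (B : ℕ → Set X) : Prop :=
  ∃ F : (ℕ → ℕ) → (ℕ → ℕ),
    ContinuousOn F {p | ∃ A : Set X, A.Nonempty ∧ IsClosed A ∧ ClosedName B A p} ∧
    ∀ (p : ℕ → ℕ) (A : Set X), A.Nonempty → IsClosed A → ClosedName B A p →
      ∃ x ∈ A, PointName B x (F p)

/-- A subset of a topological space is Π⁰₂ if it is of the form
`⋂ i, {x | x ∈ U i → x ∈ V i}` with all `U i`, `V i` open. -/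
def IsPi02 {Y : Type*} [TopologicalSpace Y] (S : Set Y) : Prop :=
  ∃ U V : ℕ → Set Y, (∀ i, IsOpen (U i)) ∧ (∀ i, IsOpen (V i)) ∧
    S = ⋂ i, {x | x ∈ U i → x ∈ V i}

/-- A space is quasi-Polish if it is homeomorphic to a Π⁰₂ subspace of `ℕ → Prop`
(with the product of Sierpiński topologies). -/
def QuasiPolish (X : Type*) [TopologicalSpace X] : Prop :=
  ∃ S : Set (ℕ → Prop), IsPi02 S ∧ Nonempty (X ≃ₜ S)

open Set Topology

namespace OvertChoice

variable {X : Type*}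

/-! ### Stages of a name -/

/-- The names of nonempty closed sets, i.e. the domain of overt choice. -/
def Dom [TopologicalSpace X] (B : ℕ → Set X) : Set (ℕ → ℕ) :=
  {p | ∃ A : Set X, A.Nonempty ∧ IsClosed A ∧ ClosedName B A p}

/-- The first `N` values of `q` force `F` to output the index `k` at position `j`. -/
def Forces [TopologicalSpace X] (B : ℕ → Set X) (F : (ℕ → ℕ) → (ℕ → ℕ))
    (q : ℕ → ℕ) (N j k : ℕ) : Prop :=
  ∀ p ∈ Dom B, (∀ i < N, p i = q i) → F p j = k + 1

/-- A finite stage of the construction. Only the first `len` values of `name` are relevant. -/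
structure ChoiceState [TopologicalSpace X] (B : ℕ → Set X) (F : (ℕ → ℕ) → (ℕ → ℕ)) where
  /-- the points used at earlier stages -/
  past : Set X
  finite_past : past.Finite
  /-- the current point -/
  pt : X
  /-- carries the finite piece of a name built so far -/
  name : ℕ → ℕ
  /-- the length of that piece -/
  len : ℕ
  /-- finitely many basic neighbourhoods of the current point -/
  fs : Finset ℕ
  mem_of_fs : ∀ k ∈ fs, pt ∈ B k
  sep : ∀ z ∈ past, ∃ k ∈ fs, (∃ j, Forces B F name len j k) ∧ z ∉ B k
  entries : ∀ i < len, ∀ k, name i = k + 1 → k ∈ fs ∨ ∃ z ∈ past, z ∈ B k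

/-- `t` is a possible next stage after `s` at which all indices in `c` have been forced. -/
structure Child [TopologicalSpace X] {B : ℕ → Set X} {F : (ℕ → ℕ) → (ℕ → ℕ)}
    (s : ChoiceState B F) (c : Finset ℕ) (t : ChoiceState B F) : Prop where
  len_lt : s.len < t.len
  agree : ∀ i < s.len, t.name i = s.name i
  points : insert s.pt s.past ⊆ insert t.pt t.past
  forces : ∀ k ∈ c, ∃ j, Forces B F t.name t.len j k
  mem_fs : ∀ j < t.len, ∀ k, Forces B F t.name t.len j k → k ∈ t.fs
  listed : ∀ z ∈ insert t.pt t.past, ∀ k < s.len, z ∈ B k → ∃ i < t.len, t.name i = k + 1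

/-! ### Extending finite pieces of names -/

open Classical in
/-- The first `N` values of `q`, followed by an enumeration of `{n | (B n ∩ A).Nonempty}` that lists
`k + 1` at position `N + k`. -/
noncomputable def splice (B : ℕ → Set X) (q : ℕ → ℕ) (N : ℕ) (A : Set X) (i : ℕ) : ℕ :=
  if i < N then q i else if (B (i - N) ∩ A).Nonempty then i - N + 1 else 0

lemma splice_lt (B : ℕ → Set X) (q : ℕ → ℕ) {N i : ℕ} (A : Set X) (h : i < N) :
    splice B q N A i = q i := by simp [splice, h]

lemma splice_add (B : ℕ → Set X) (q : ℕ → ℕ) (N k : ℕ) {A : Set X} (h : (B k ∩ A).Nonempty) :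
    splice B q N A (N + k) = k + 1 := by simp [splice, h]

lemma closedName_splice (B : ℕ → Set X) (q : ℕ → ℕ) (N : ℕ) (A : Set X)
    (h : ∀ i < N, ∀ k, q i = k + 1 → (B k ∩ A).Nonempty) : ClosedName B A (splice B q N A) := by
  ext k
  constructor
  · intro hk
    exact ⟨N + k, splice_add B q N k hk⟩
  · rintro ⟨i, hi⟩
    by_cases hiN : i < N
    · rw [splice_lt B q A hiN] at hi
      exact h i hiN k hi
    · simp only [splice, hiN, if_false] at hi
      split_ifs at hi with h2
      obtain rfl : i - N = k := by omega
      exact h2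

lemma exists_modulus [TopologicalSpace X] {B : ℕ → Set X} {F : (ℕ → ℕ) → (ℕ → ℕ)}
    (hF : ContinuousOn F (Dom B)) {p : ℕ → ℕ} (hp : p ∈ Dom B) (j : ℕ) :
    ∃ N, ∀ p' ∈ Dom B, (∀ i < N, p' i = p i) → F p' j = F p j := by
  have h1 : ContinuousWithinAt (fun q => F q j) (Dom B) p :=
    ((continuous_apply j).comp_continuousOn hF) p hp
  have h2 : {q | F q j = F p j} ∈ 𝓝[Dom B] p :=
    h1 (IsOpen.mem_nhds (isOpen_discrete {F p j}) rfl)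
  obtain ⟨u, hu, hpu, hsub⟩ := mem_nhdsWithin.1 h2
  obtain ⟨I, v, hv, hIv⟩ := isOpen_pi_iff.1 hu p hpu
  refine ⟨I.sup id + 1, fun p' hp' hag => hsub ⟨hIv fun i hi => ?_, hp'⟩⟩
  have : i ≤ I.sup id := Finset.le_sup (f := id) hi
  rw [hag i (by omega)]
  exact (hv i hi).2

/-- A finite set of values of `F p` is forced by some finite piece of `p`. -/
lemma exists_forces [TopologicalSpace X] {B : ℕ → Set X} {F : (ℕ → ℕ) → (ℕ → ℕ)}
    (hF : ContinuousOn F (Dom B)) {p : ℕ → ℕ} (hp : p ∈ Dom B) (T : Finset ℕ)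
    (hT : ∀ k ∈ T, ∃ j, F p j = k + 1) (N₀ : ℕ) :
    ∃ N ≥ N₀, ∀ k ∈ T, ∃ j, Forces B F p N j k := by
  have h1 : ∀ k ∈ T, ∃ N, ∃ j, Forces B F p N j k := by
    intro k hk
    obtain ⟨j, hj⟩ := hT k hk
    obtain ⟨N, hN⟩ := exists_modulus hF hp j
    exact ⟨N, j, fun p' hp' hag => (hN p' hp' hag).trans hj⟩
  choose! f hf using h1
  refine ⟨max N₀ (T.sup f), le_max_left _ _, fun k hk => ?_⟩
  obtain ⟨j, hj⟩ := hf k hk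
  refine ⟨j, fun p' hp' hag => hj p' hp' fun i hi => hag i ?_⟩
  exact lt_of_lt_of_le hi ((Finset.le_sup hk).trans (le_max_right _ _))

/-! ### Existence of next stages -/

/-- If `F p` avoids every point of `P`, then overt choice picks `x` from `P ∪ {x}`. -/
lemma pointName_of_avoid [TopologicalSpace X] [T1Space X] {B : ℕ → Set X}
    {F : (ℕ → ℕ) → (ℕ → ℕ)}
    (hch : ∀ (p : ℕ → ℕ) (A : Set X), A.Nonempty → IsClosed A → ClosedName B A p →
      ∃ x ∈ A, PointName B x (F p))
    {P : Set X} (hP : P.Finite) {x : X} {p : ℕ → ℕ} (hp : ClosedName B (insert x P) p)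
    (hav : ∀ z ∈ P, z ≠ x → ∃ j k, F p j = k + 1 ∧ z ∉ B k) :
    p ∈ Dom B ∧ PointName B x (F p) := by
  have hcl : IsClosed (insert x P) := (hP.insert x).isClosed
  refine ⟨⟨_, insert_nonempty _ _, hcl, hp⟩, ?_⟩
  obtain ⟨z, hz, hzn⟩ := hch p _ (insert_nonempty _ _) hcl hp
  by_cases hzx : z = x
  · exact hzx ▸ hzn
  · obtain ⟨j, k, hjk, hzk⟩ := hav z (hz.resolve_left hzx) hzx
    have : k ∈ {n | z ∈ B n} := by rw [hzn]; exact ⟨j, hjk⟩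
    exact absurd this hzk

lemma exists_basis_sep [TopologicalSpace X] [T1Space X] {B : ℕ → Set X} (hB : IsCountableBasis B)
    {x z : X} (h : z ≠ x) : ∃ k, x ∈ B k ∧ z ∉ B k := by
  obtain ⟨S, hS⟩ := hB.2 {z}ᶜ isOpen_compl_singleton
  have hx : x ∈ ⋃ n ∈ S, B n := hS ▸ (show x ∈ ({z}ᶜ : Set X) from fun h' => h h'.symm)
  simp only [mem_iUnion] at hx
  obtain ⟨k, hk, hxk⟩ := hx
  refine ⟨k, hxk, fun hz => ?_⟩
  have : z ∈ ({z}ᶜ : Set X) := by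
    rw [hS]; exact mem_biUnion hk hz
  exact this rfl

/-- Any point compatible with a stage can be made the current point of a next stage. -/
lemma exists_child [TopologicalSpace X] [T1Space X] {B : ℕ → Set X} (hB : IsCountableBasis B)
    {F : (ℕ → ℕ) → (ℕ → ℕ)} (hF : ContinuousOn F (Dom B))
    (hch : ∀ (p : ℕ → ℕ) (A : Set X), A.Nonempty → IsClosed A → ClosedName B A p →
      ∃ x ∈ A, PointName B x (F p))
    (s : ChoiceState B F) (c : Finset ℕ) (x : X) (hs : ∀ k ∈ s.fs, x ∈ B k)
    (hc : ∀ k ∈ c, x ∈ B k) : ∃ t, Child s c t ∧ ∀ k ∈ t.fs, x ∈ B k := by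
  classical
  obtain ⟨T, hcT, hTx, hTsep⟩ : ∃ T : Finset ℕ, c ⊆ T ∧ (∀ k ∈ T, x ∈ B k) ∧
      (s.pt ≠ x → ∃ k ∈ T, s.pt ∉ B k) := by
    by_cases h : s.pt = x
    · exact ⟨c, subset_rfl, hc, fun h' => absurd h h'⟩
    · obtain ⟨k, hk, hk'⟩ := exists_basis_sep hB h
      refine ⟨insert k c, Finset.subset_insert _ _, ?_, fun _ => ⟨k, by simp, hk'⟩⟩
      intro l hl
      rcases Finset.mem_insert.1 hl with rfl | hl
      exacts [hk, hc l hl]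
  -- The current point of `s` is left out of the first name: `F` is not yet known to avoid it.
  set p₁ := splice B s.name s.len (insert x s.past) with hp₁
  have hag₁ : ∀ i < s.len, p₁ i = s.name i := fun i hi => splice_lt _ _ _ hi
  have hn₁ : ClosedName B (insert x s.past) p₁ := by
    apply closedName_splice
    intro i hi k hk
    rcases s.entries i hi k hk with h | ⟨z, hz, hzk⟩
    · exact ⟨x, hs k h, mem_insert _ _⟩
    · exact ⟨z, hzk, mem_insert_of_mem _ hz⟩
  have hav₁ : ∀ p ∈ Dom B, (∀ i < s.len, p i = s.name i) → ∀ z ∈ s.past,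
      ∃ j k, F p j = k + 1 ∧ z ∉ B k := by
    intro p hp hag z hz
    obtain ⟨k, -, ⟨j, hj⟩, hzk⟩ := s.sep z hz
    exact ⟨j, k, hj p hp hag, hzk⟩
  have hd₁ : p₁ ∈ Dom B := ⟨_, insert_nonempty _ _, (s.finite_past.insert x).isClosed, hn₁⟩
  have hx₁ := (pointName_of_avoid hch s.finite_past hn₁
    fun z hz _ => hav₁ p₁ hd₁ hag₁ z hz).2
  obtain ⟨N, hN, hforce⟩ := exists_forces hF hd₁ T (fun k hk => by
    have : k ∈ {n | x ∈ B n} := hTx k hk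
    rw [hx₁] at this
    exact this) s.len
  set P : Set X := insert s.pt s.past \ {x} with hP
  have hPfin : P.Finite := (s.finite_past.insert _).subset sdiff_subset
  have hPx : insert x P = insert x (insert s.pt s.past) := by rw [hP, insert_sdiff_singleton]
  set p₂ := splice B p₁ N (insert x P) with hp₂
  have hag₂ : ∀ i < N, p₂ i = p₁ i := fun i hi => splice_lt _ _ _ hi
  have hn₂ : ClosedName B (insert x P) p₂ := by
    apply closedName_splice
    intro i hi k hk
    have : k ∈ {n | (B n ∩ insert x s.past).Nonempty} := by rw [hn₁]; exact ⟨i, hk⟩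
    refine Set.Nonempty.mono (inter_subset_inter_right _ ?_) this
    rw [hPx]
    exact insert_subset_insert (subset_insert _ _)
  have hd₂ : p₂ ∈ Dom B := ⟨_, insert_nonempty _ _, (hPfin.insert x).isClosed, hn₂⟩
  -- The enlarged length leaves room to list every `k < s.len` after position `N`.
  set M := N + s.len + 1 with hM
  have hforce₂ : ∀ k ∈ T, ∃ j, Forces B F p₂ M j k := by
    intro k hk
    obtain ⟨j, hj⟩ := hforce k hk
    exact ⟨j, fun p hp hag => hj p hp fun i hi => (hag i (by omega)).trans (hag₂ i hi)⟩
  have hag_s : ∀ i < s.len, p₂ i = s.name i := fun i hi =>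
    (hag₂ i (by omega)).trans (hag₁ i hi)
  have hsep : ∀ z ∈ P, ∃ k, (k ∈ s.fs ∨ k ∈ T) ∧ (∃ j, Forces B F p₂ M j k) ∧ z ∉ B k := by
    rintro z ⟨rfl | hz, hzx⟩
    · obtain ⟨k, hk, hk'⟩ := hTsep hzx
      exact ⟨k, Or.inr hk, hforce₂ k hk, hk'⟩
    · obtain ⟨k, hk, ⟨j, hj⟩, hzk⟩ := s.sep z hz
      exact ⟨k, Or.inl hk, ⟨j, fun p hp hag => hj p hp fun i hi =>
        (hag i (by omega)).trans (hag_s i hi)⟩, hzk⟩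
  have hx₂ := (pointName_of_avoid hch hPfin hn₂ fun z hz _ => by
    obtain ⟨k, -, ⟨j, hj⟩, hzk⟩ := hsep z hz
    exact ⟨j, k, hj p₂ hd₂ fun _ _ => rfl, hzk⟩).2
  let a : Finset ℕ := (s.fs ∪ T ∪ (Finset.range M).image (fun i => p₂ i - 1) ∪
    (Finset.range M).image (fun j => F p₂ j - 1)).filter (fun k => x ∈ B k)
  have ha : ∀ k ∈ a, x ∈ B k := fun k hk => (Finset.mem_filter.1 hk).2
  refine ⟨⟨P, hPfin, x, p₂, M, a, ha, ?_, ?_⟩, ⟨?_, hag_s, ?_, ?_, ?_, ?_⟩, ha⟩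
  · intro z hz
    obtain ⟨k, hk, hj, hzk⟩ := hsep z hz
    refine ⟨k, Finset.mem_filter.2 ⟨?_, hk.elim (hs k) (hTx k)⟩, hj, hzk⟩
    simp only [Finset.mem_union]
    tauto
  · intro i hi k hk
    have : k ∈ {n | (B n ∩ insert x P).Nonempty} := by rw [hn₂]; exact ⟨i, hk⟩
    obtain ⟨z, hzk, rfl | hz⟩ := this
    · refine Or.inl (Finset.mem_filter.2 ⟨?_, hzk⟩)
      refine Finset.mem_union_left _ (Finset.mem_union_right _ ?_)
      exact Finset.mem_image.2 ⟨i, Finset.mem_range.2 hi, by omega⟩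
    · exact Or.inr ⟨z, hz, hzk⟩
  · change s.len < M
    omega
  · change _ ⊆ insert x P
    rw [hPx]
    exact subset_insert _ _
  · exact fun k hk => hforce₂ k (hcT hk)
  · intro j hj k hk
    have hFj : F p₂ j = k + 1 := hk p₂ hd₂ fun _ _ => rfl
    have hxk : k ∈ {n | x ∈ B n} := by rw [hx₂]; exact ⟨j, hFj⟩
    refine Finset.mem_filter.2 ⟨Finset.mem_union_right _ ?_, hxk⟩
    exact Finset.mem_image.2 ⟨j, Finset.mem_range.2 hj, by omega⟩
  · intro z hz k hk hzk
    exact ⟨N + k, by change N + k < M; omega, splice_add B p₁ N k ⟨z, hzk, hz⟩⟩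

/-! ### Limits of infinite runs -/

/-- An infinite run of stages below `y`, in which every element of `y` is eventually forced,
produces a point whose set of basic neighbourhoods is `y`. -/
lemma limit_mem_range [TopologicalSpace X] {B : ℕ → Set X} (hB : IsCountableBasis B)
    {F : (ℕ → ℕ) → (ℕ → ℕ)} (hF : ContinuousOn F (Dom B))
    (hch : ∀ (p : ℕ → ℕ) (A : Set X), A.Nonempty → IsClosed A → ClosedName B A p →
      ∃ x ∈ A, PointName B x (F p))
    (y : ℕ → Prop) (s : ℕ → ChoiceState B F) (c : ℕ → Finset ℕ)
    (hs : ∀ n, Child (s n) (c n) (s (n + 1))) (hy : ∀ n, ∀ k ∈ (s n).fs, y k)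
    (hc : ∀ k, y k → ∃ n, k ∈ c n) : ∃ x, (fun n => x ∈ B n) = y := by
  have hlen : ∀ n, n ≤ (s n).len := by
    intro n
    induction n with
    | zero => exact Nat.zero_le _
    | succ n ih => exact Nat.succ_le_of_lt (lt_of_le_of_lt ih (hs n).len_lt)
  have hmono : Monotone fun n => (s n).len := monotone_nat_of_le_succ fun n => (hs n).len_lt.le
  have hpts : Monotone fun n => insert (s n).pt (s n).past :=
    monotone_nat_of_le_succ fun n => (hs n).points
  have hagree : ∀ n d, ∀ i < (s n).len, (s (n + d)).name i = (s n).name i := by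
    intro n d
    induction d with
    | zero => intros; rfl
    | succ d ih =>
      intro i hi
      rw [← ih i hi]
      exact (hs (n + d)).agree i (lt_of_lt_of_le hi (hmono (Nat.le_add_right n d)))
  set p : ℕ → ℕ := fun i => (s (i + 1)).name i with hp
  have hpn : ∀ n, ∀ i < (s n).len, p i = (s n).name i := by
    intro n i hi
    have h1 := hagree n (i + 1) i hi
    have h2 := hagree (i + 1) n i (hlen (i + 1))
    rw [Nat.add_comm] at h2
    exact h2.symm.trans h1
  set A : Set X := closure (⋃ n, insert (s n).pt (s n).past) with hA
  have hAne : A.Nonempty := ⟨(s 0).pt, subset_closure (mem_iUnion.2 ⟨0, mem_insert _ _⟩)⟩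
  have hname : ClosedName B A p := by
    ext k
    constructor
    · rintro ⟨w, hwk, hwA⟩
      obtain ⟨z, hzk, hz⟩ := mem_closure_iff.1 hwA _ (hB.1 k) hwk
      obtain ⟨n, hzn⟩ := mem_iUnion.1 hz
      have hzm : z ∈ insert (s (n + k + 1 + 1)).pt (s (n + k + 1 + 1)).past :=
        hpts (show n ≤ n + k + 1 + 1 by omega) hzn
      obtain ⟨i, hi, hik⟩ := (hs (n + k + 1)).listed z hzm k
        (lt_of_lt_of_le (by omega) (hlen (n + k + 1))) hzk
      exact ⟨i, (hpn _ i hi).trans hik⟩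
    · rintro ⟨i, hi⟩
      have hmem : ∀ z ∈ insert (s (i + 1)).pt (s (i + 1)).past, z ∈ A := fun z hz =>
        subset_closure (mem_iUnion.2 ⟨i + 1, hz⟩)
      rcases (s (i + 1)).entries i (hlen (i + 1)) k hi with h | ⟨z, hz, hzk⟩
      · exact ⟨_, (s (i + 1)).mem_of_fs k h, hmem _ (mem_insert _ _)⟩
      · exact ⟨z, hzk, hmem _ (mem_insert_of_mem _ hz)⟩
  have hd : p ∈ Dom B := ⟨A, hAne, isClosed_closure, hname⟩
  obtain ⟨x, -, hx⟩ := hch p A hAne isClosed_closure hname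
  refine ⟨x, funext fun k => propext ⟨fun hk => ?_, fun hk => ?_⟩⟩
  · have hk' : k ∈ {n | x ∈ B n} := hk
    rw [hx] at hk'
    obtain ⟨j, hj⟩ := hk'
    obtain ⟨N, hN⟩ := exists_modulus hF hd j
    have hl := hlen (N + j + 1)
    refine hy (N + j + 1) k ((hs (N + j)).mem_fs j (by omega) k fun p' hp' hag => ?_)
    refine (hN p' hp' fun i hi => ?_).trans hj
    exact (hag i (by omega)).trans (hpn _ i (by omega)).symm
  · obtain ⟨n, hn⟩ := hc k hk
    obtain ⟨j, hj⟩ := (hs n).forces k hn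
    have : k ∈ {n | x ∈ B n} := by rw [hx]; exact ⟨j, hj p hd (hpn (n + 1))⟩
    exact this

/-! ### The Π⁰₂ description of the range -/

open Classical in
/-- The stage reached by successively forcing finite sets `c` and moving to a next stage with set
`a` (the last move is the head of the list); impossible moves are skipped. This enumerates
countably many stages. -/
noncomputable def stage [TopologicalSpace X] {B : ℕ → Set X} {F : (ℕ → ℕ) → (ℕ → ℕ)}
    (r : ChoiceState B F) : List (Finset ℕ × Finset ℕ) → ChoiceState B F
  | [] => r
  | (c, a) :: l =>
    if h : ∃ t, Child (stage r l) c t ∧ t.fs = a then h.choose else stage r l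

lemma stage_cons [TopologicalSpace X] {B : ℕ → Set X} {F : (ℕ → ℕ) → (ℕ → ℕ)}
    (r : ChoiceState B F) (l : List (Finset ℕ × Finset ℕ)) (c a : Finset ℕ)
    (h : ∃ t, Child (stage r l) c t ∧ t.fs = a) :
    Child (stage r l) c (stage r ((c, a) :: l)) ∧ (stage r ((c, a) :: l)).fs = a := by
  rw [stage, dif_pos h]
  exact h.choose_spec

lemma isPi02_of_countable {Y ι : Type*} [TopologicalSpace Y] [Countable ι] [Nonempty ι]
    {S : Set Y} (U V : ι → Set Y) (hU : ∀ i, IsOpen (U i)) (hV : ∀ i, IsOpen (V i))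
    (h : ∀ y, y ∈ S ↔ ∀ i, y ∈ U i → y ∈ V i) : IsPi02 S := by
  obtain ⟨f, hf⟩ := exists_surjective_nat ι
  refine ⟨U ∘ f, V ∘ f, fun n => hU _, fun n => hV _, ?_⟩
  ext y
  simp only [h, mem_iInter, mem_ofPred_eq, Function.comp]
  exact ⟨fun H n => H _, fun H i => by obtain ⟨n, rfl⟩ := hf i; exact H n⟩

lemma isOpen_finset (a : Finset ℕ) : IsOpen {y : ℕ → Prop | ∀ k ∈ a, y k} := by
  have : {y : ℕ → Prop | ∀ k ∈ a, y k} = ⋂ k ∈ a, {y | y k} := by ext; simp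
  rw [this]
  exact isOpen_biInter_finset fun k _ => continuous_Prop.1 (continuous_apply k)

lemma isPi02_range [TopologicalSpace X] [T1Space X] {B : ℕ → Set X} (hB : IsCountableBasis B)
    (h : OvertChoiceContinuous B) : IsPi02 (range fun (x : X) (n : ℕ) => x ∈ B n) := by
  classical
  obtain ⟨F, hF, hch⟩ := h
  rcases isEmpty_or_nonempty X with hX | ⟨⟨x₀⟩⟩
  · refine ⟨fun _ => univ, fun _ => ∅, fun _ => isOpen_univ, fun _ => isOpen_empty, ?_⟩
    rw [range_eq_empty]
    ext; simp
  -- The initial point is irrelevant: no set is imposed, so the first move can go to any point.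
  let r : ChoiceState B F := ⟨∅, finite_empty, x₀, 0, 0, ∅, by simp, by simp, by simp⟩
  refine isPi02_of_countable (ι := List (Finset ℕ × Finset ℕ) × Finset ℕ)
    (fun i => {y | ∀ k ∈ (stage r i.1).fs, y k} ∩ {y | ∀ k ∈ i.2, y k})
    (fun i => ⋃ t : {t // Child (stage r i.1) i.2 t}, {y | ∀ k ∈ t.1.fs, y k})
    (fun i => (isOpen_finset _).inter (isOpen_finset _))
    (fun i => isOpen_iUnion fun t => isOpen_finset _) fun y => ⟨?_, fun hy => ?_⟩
  · rintro ⟨x, rfl⟩ ⟨l, c⟩ ⟨h1, h2⟩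
    obtain ⟨t, ht, htx⟩ := exists_child hB hF hch (stage r l) c x h1 h2
    exact mem_iUnion.2 ⟨⟨t, ht⟩, htx⟩
  · let c : ℕ → Finset ℕ := fun n => (Finset.range n).filter y
    have step : ∀ (n : ℕ) (l : {l // ∀ k ∈ (stage r l).fs, y k}),
        ∃ l' : {l // ∀ k ∈ (stage r l).fs, y k}, Child (stage r l.1) (c n) (stage r l'.1) := by
      rintro n ⟨l, hl⟩
      obtain ⟨⟨t, ht⟩, hty⟩ := mem_iUnion.1
        (hy (l, c n) ⟨hl, fun k hk => (Finset.mem_filter.1 hk).2⟩)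
      have h1 := stage_cons r l (c n) t.fs ⟨t, ht, rfl⟩
      exact ⟨⟨(c n, t.fs) :: l, fun k hk => hty k (h1.2 ▸ hk)⟩, h1.1⟩
    choose f hf using step
    let L : ℕ → {l // ∀ k ∈ (stage r l).fs, y k} := fun n =>
      Nat.rec ⟨[], fun k hk => absurd hk (Finset.notMem_empty k)⟩ f n
    exact limit_mem_range hB hF hch y (fun n => stage r (L n).1) c (fun n => hf n (L n))
      (fun n => (L n).2) fun k hk => ⟨k + 1, by simp [c, hk]⟩

/-! ### The embedding -/

lemma isEmbedding [TopologicalSpace X] [T1Space X] {B : ℕ → Set X} (hB : IsCountableBasis B) :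
    IsEmbedding fun (x : X) (n : ℕ) => x ∈ B n := by
  have hc : Continuous fun (x : X) (n : ℕ) => x ∈ B n :=
    continuous_pi fun n => continuous_Prop.2 (hB.1 n)
  refine ⟨⟨le_antisymm hc.le_induced fun U hU => ?_⟩, fun x z hxz => ?_⟩
  · obtain ⟨S, rfl⟩ := hB.2 U hU
    refine isOpen_induced_iff.2 ⟨⋃ n ∈ S, {y | y n}, isOpen_biUnion fun n _ =>
      continuous_Prop.1 (continuous_apply n), ?_⟩
    ext; simp
  · by_contra hne
    obtain ⟨k, hk, hk'⟩ := exists_basis_sep hB hne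
    exact hk' ((congrFun hxz k).symm ▸ hk)

end OvertChoice

/-- If `X` is a countably-based `T1` space and overt choice for `X` is continuous,
then `X` is quasi-Polish. -/
theorem quasiPolish_of_overtChoiceContinuous {X : Type*} [TopologicalSpace X] [T1Space X]
    (B : ℕ → Set X) (hB : IsCountableBasis B) (h : OvertChoiceContinuous B) :
    QuasiPolish X :=
  ⟨_, OvertChoice.isPi02_range hB h, ⟨(OvertChoice.isEmbedding hB).toHomeomorph⟩⟩
end

section
/- Overt choice for ℚ and C_ℕ are topologically Weihrauch incomparable. (1) There do not exist continuous K and H such that K maps every name p of a nonempty closed set A ⊆ ℚ to an enumeration of ℕ ∖ S for some nonempty S ⊆ ℕ, and H (p, n) is a name of some point of A for every n ∈ S. (2) There do not exist continuous K' and H' such that K' maps every p enumerating ℕ ∖ S for a nonempty S ⊆ ℕ to a name of some nonempty closed set A ⊆ ℚ, and H' (p, q) ∈ S for every name q of any point of A. -/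
/-- The basis of ℚ given by an enumeration `e` of pairs of rationals: the `n`-th basic
open set is the rational open interval with endpoints `e n` (i.e. `Iₙ ∩ ℚ`). -/
def ratBasis (e : ℕ → ℚ × ℚ) (n : ℕ) : Set ℚ := Set.Ioo (e n).1 (e n).2

/-! ### Finite prefixes and limits in Baire space -/

/-- A neighbourhood in Baire space contains a cylinder. -/
lemma exists_prefix_of_mem_nhds {p : ℕ → ℕ} {s : Set (ℕ → ℕ)} (hs : s ∈ nhds p) :
    ∃ L : ℕ, ∀ p' : ℕ → ℕ, (∀ i < L, p' i = p i) → p' ∈ s := by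
  rw [nhds_pi, Filter.mem_pi] at hs
  obtain ⟨I, hI, t, ht, hts⟩ := hs
  obtain ⟨M, hM⟩ := hI.bddAbove
  refine ⟨M + 1, fun p' hp' => hts ?_⟩
  intro i hi
  rw [hp' i (Nat.lt_succ_of_le (hM hi))]
  exact mem_of_mem_nhds (ht i)

/-- Each entry of the output of a continuous map is determined by a finite prefix of the input. -/
lemma exists_prefix_of_continuousOn {f : (ℕ → ℕ) → (ℕ → ℕ)} {D : Set (ℕ → ℕ)}
    (hf : ContinuousOn f D) {p : ℕ → ℕ} (hp : p ∈ D) (k : ℕ) :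
    ∃ L : ℕ, ∀ p' ∈ D, (∀ i < L, p' i = p i) → f p' k = f p k := by
  have h1 : ContinuousWithinAt (fun p' => f p' k) D p :=
    (continuous_apply k).continuousAt.comp_continuousWithinAt (hf p hp)
  have h2 : (fun p' => f p' k) ⁻¹' {f p k} ∈ nhdsWithin p D :=
    h1 ((isOpen_discrete _).mem_nhds rfl)
  rw [mem_nhdsWithin_iff_exists_mem_nhds_inter] at h2
  obtain ⟨u, hu, hsub⟩ := h2
  obtain ⟨L, hL⟩ := exists_prefix_of_mem_nhds hu
  exact ⟨L, fun p' hD hp' => hsub ⟨hL p' hp', hD⟩⟩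

/-- A prefix listing only elements of `T` extends to an enumeration of `T`. -/
lemma exists_enumerates_extending (T : Set ℕ) (p : ℕ → ℕ) (L : ℕ)
    (h : ∀ i < L, ∀ m, p i = m + 1 → m ∈ T) :
    ∃ p' : ℕ → ℕ, (∀ i < L, p' i = p i) ∧ Enumerates p' T := by
  classical
  refine ⟨fun i => if i < L then p i else if i - L ∈ T then i - L + 1 else 0,
    fun i hi => by simp [hi], ?_⟩
  ext m
  constructor
  · intro hm
    exact ⟨L + m, by simp [hm]⟩
  · rintro ⟨k, hk⟩
    by_cases hkL : k < L
    · simp only [hkL, if_true] at hk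
      exact h k hkL m hk
    · simp only [hkL, if_false] at hk
      split_ifs at hk with hT
      · have : k - L = m := by omega
        exact this ▸ hT

/-- Sequences that agree on longer and longer prefixes have a common limit. -/
lemma exists_limit (P : ℕ → ℕ → ℕ) (L : ℕ → ℕ) (hL : ∀ n, L n < L (n + 1))
    (hP : ∀ n, ∀ i < L n, P (n + 1) i = P n i) :
    ∃ p : ℕ → ℕ, ∀ n, ∀ i < L n, p i = P n i := by
  have hmono : StrictMono L := strictMono_nat_of_lt_succ hL
  have key : ∀ n m, n ≤ m → ∀ i < L n, P m i = P n i := by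
    intro n m hnm
    induction m, hnm using Nat.le_induction with
    | base => intro i _; rfl
    | succ m hnm ih =>
      intro i hi
      rw [hP m i (lt_of_lt_of_le hi (hmono.monotone hnm)), ih i hi]
  refine ⟨fun i => P (i + 1) i, fun n i hi => ?_⟩
  have hi' : i < L (i + 1) := lt_of_lt_of_le (Nat.lt_succ_self i) (hmono.id_le (i + 1))
  rcases le_total n (i + 1) with h | h
  · exact key n (i + 1) h i hi
  · exact (key (i + 1) n h i hi').symm

/-- Dependent choice with an invariant. -/
lemma exists_seq_of_step {σ : Type*} (Inv : σ → Prop) (R : ℕ → σ → σ → Prop) (s₀ : σ)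
    (h₀ : Inv s₀) (step : ∀ n s, Inv s → ∃ s', Inv s' ∧ R n s s') :
    ∃ f : ℕ → σ, (∀ n, Inv (f n)) ∧ ∀ n, R n (f n) (f (n + 1)) := by
  choose g hg1 hg2 using step
  let F : ℕ → {s // Inv s} := fun n =>
    Nat.rec ⟨s₀, h₀⟩ (fun n s => ⟨g n s.1 s.2, hg1 n s.1 s.2⟩) n
  exact ⟨fun n => (F n).1, fun n => (F n).2, fun n => hg2 n (F n).1 (F n).2⟩

/-! ### The topology of `ℚ` -/

lemma exists_ratBasis_subset {e : ℕ → ℚ × ℚ} (he : Function.Surjective e) {W : Set ℚ}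
    (hW : IsOpen W) {x : ℚ} (hx : x ∈ W) :
    ∃ u, x ∈ ratBasis e u ∧ ratBasis e u ⊆ W := by
  obtain ⟨a, b, hab, hsub⟩ := mem_nhds_iff_exists_Ioo_subset.1 (hW.mem_nhds hx)
  obtain ⟨u, hu⟩ := he (a, b)
  exact ⟨u, by simpa [ratBasis, hu] using hab, by simpa [ratBasis, hu] using hsub⟩

lemma isOpen_ratBasis (e : ℕ → ℚ × ℚ) (n : ℕ) : IsOpen (ratBasis e n) := isOpen_Ioo

/-- `ℚ` is zero-dimensional: intervals of irrational radius are clopen. -/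
lemma exists_clopen_rat {W : Set ℚ} (hW : IsOpen W) {x : ℚ} (hx : x ∈ W) :
    ∃ V : Set ℚ, IsClopen V ∧ x ∈ V ∧ V ⊆ W := by
  obtain ⟨ε, hε, hsub⟩ := Metric.isOpen_iff.1 hW x hx
  obtain ⟨r, hr, hr0, hrε⟩ := exists_irrational_btwn hε
  refine ⟨Metric.ball x r, ⟨?_, Metric.isOpen_ball⟩, Metric.mem_ball_self hr0,
    (Metric.ball_subset_ball hrε.le).trans hsub⟩
  have : Metric.ball x r = Metric.closedBall x r := by
    ext y
    simp only [Metric.mem_ball, Metric.mem_closedBall]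
    refine ⟨le_of_lt, fun h => lt_of_le_of_ne h ?_⟩
    intro heq
    refine hr ⟨|y - x|, ?_⟩
    rw [← heq, Rat.dist_eq]
    push_cast
    rfl
  rw [this]
  exact Metric.isClosed_closedBall

/-- Since `ℚ` has no isolated points, the promises made by a finite prefix of a name of the open
set `A` are witnessed by finitely many points of `A` different from a given `x`. -/
lemma exists_finite_witnesses {e : ℕ → ℚ × ℚ} {A : Set ℚ} (hA : IsOpen A) (hne : A.Nonempty)
    {p : ℕ → ℕ} (hp : ClosedName (ratBasis e) A p) (x : ℚ) (L : ℕ) :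
    ∃ F : Set ℚ, F.Finite ∧ F ⊆ A ∧ x ∉ F ∧ F.Nonempty ∧
      ∀ i < L, ∀ m, p i = m + 1 → (ratBasis e m ∩ F).Nonempty := by
  have avoid : ∀ O : Set ℚ, IsOpen O → O.Nonempty → ∃ b ∈ O, b ≠ x := by
    intro O hO hOne
    obtain ⟨b, hb, hbx⟩ := (dense_compl_singleton x).inter_open_nonempty O hO hOne
    exact ⟨b, hb, hbx⟩
  obtain ⟨c, hcA, hcx⟩ := avoid A hA hne
  have h : ∀ i, ∃ b ∈ A, b ≠ x ∧ ∀ m, p i = m + 1 → b ∈ ratBasis e m := by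
    intro i
    by_cases hi : ∃ m, p i = m + 1
    · obtain ⟨m, hm⟩ := hi
      have hmem : m ∈ {n | (ratBasis e n ∩ A).Nonempty} := by
        rw [show {n | (ratBasis e n ∩ A).Nonempty} = {n | ∃ k, p k = n + 1} from hp]
        exact ⟨i, hm⟩
      obtain ⟨b, hb, hbx⟩ := avoid _ ((isOpen_ratBasis e m).inter hA) hmem
      refine ⟨b, hb.2, hbx, fun m' hm' => ?_⟩
      have : m = m' := by omega
      exact this ▸ hb.1
    · exact ⟨c, hcA, hcx, fun m hm => (hi ⟨m, hm⟩).elim⟩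
  choose b hbA hbx hbm using h
  refine ⟨insert c (b '' Set.Iio L), ((Set.finite_Iio L).image b).insert c, ?_, ?_,
    ⟨c, Set.mem_insert _ _⟩, ?_⟩
  · rintro y (rfl | ⟨i, -, rfl⟩)
    · exact hcA
    · exact hbA i
  · rintro (h | ⟨i, -, h⟩)
    · exact hcx h.symm
    · exact hbx i h
  · intro i hi m hm
    exact ⟨b i, hbm i m hm, Or.inr ⟨i, hi, rfl⟩⟩

/-! ### Discontinuity of overt choice for `ℚ` -/

/-- `p` is a name of some nonempty closed subset of `ℚ`, i.e. of an instance of overt choice. -/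
def ValidName (e : ℕ → ℚ × ℚ) (p : ℕ → ℕ) : Prop :=
  ∃ A : Set ℚ, A.Nonempty ∧ IsClosed A ∧ ClosedName (ratBasis e) A p

/-- A stage of the construction against a continuous choice function: the current clopen set, a
name of it, the length of the part of the name that is fixed, and an open set to which the choice
function is confined by that part. -/
structure Stage where
  A : Set ℚ
  p : ℕ → ℕ
  L : ℕ
  U : Set ℚ

/-- No continuous function solves overt choice for `ℚ`, not even on the cylinder of a single prefix
of a name of `ℚ`. -/
lemma no_local_continuous_choice {e : ℕ → ℚ × ℚ} (he : Function.Surjective e) (p₀ : ℕ → ℕ)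
    (L₀ : ℕ) (hp₀ : ClosedName (ratBasis e) Set.univ p₀) (h : (ℕ → ℕ) → (ℕ → ℕ))
    (hcont : ContinuousOn h {p | ValidName e p ∧ ∀ i < L₀, p i = p₀ i})
    (hsol : ∀ p A, A.Nonempty → IsClosed A → ClosedName (ratBasis e) A p →
      (∀ i < L₀, p i = p₀ i) → ∃ x ∈ A, PointName (ratBasis e) x (h p)) : False := by
  obtain ⟨q, hq⟩ := exists_surjective_nat ℚ
  let D : Set (ℕ → ℕ) := {p | ValidName e p ∧ ∀ i < L₀, p i = p₀ i}
  -- every valid input sharing the fixed prefix is sent to a name of a point of `U`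
  let Forces : (ℕ → ℕ) → ℕ → Set ℚ → Prop := fun p L U =>
    ∀ p' ∈ D, (∀ i < L, p' i = p i) → ∀ x, PointName (ratBasis e) x (h p') → x ∈ U
  let Inv : Stage → Prop := fun s =>
    s.A.Nonempty ∧ IsClopen s.A ∧ ClosedName (ratBasis e) s.A s.p ∧ (∀ i < L₀, s.p i = p₀ i) ∧
      L₀ ≤ s.L ∧ IsOpen s.U ∧ Forces s.p s.L s.U
  let R : ℕ → Stage → Stage → Prop := fun n s t =>
    s.L < t.L ∧ (∀ i < t.L, t.p i = s.p i) ∧ t.A ⊆ s.A ∧ s.A \ t.U ⊆ t.A ∧ t.U ⊆ s.U ∧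
      (s.A \ t.U).Nonempty ∧
      (∀ i < s.L, ∀ m, s.p i = m + 1 → (ratBasis e m ∩ (s.A \ t.U)).Nonempty) ∧
      ((ratBasis e n ∩ s.A).Nonempty → ∃ i < t.L, s.p i = n + 1) ∧
      (q n ∈ t.U → q n ∉ t.A)
  have step : ∀ n s, Inv s → ∃ t, Inv t ∧ R n s t := by
    rintro n ⟨A, p, L, U⟩ ⟨hne, hclopen, hname, hpre, hL, hU, hforce⟩
    simp only at hne hclopen hname hpre hL hU hforce
    have hpD : p ∈ D := ⟨⟨A, hne, hclopen.1, hname⟩, hpre⟩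
    obtain ⟨x, hxA, hx⟩ := hsol p A hne hclopen.1 hname hpre
    have hxU : x ∈ U := hforce p hpD (fun _ _ => rfl) x hx
    obtain ⟨F, hFfin, hFA, hxF, hFne, hFw⟩ :=
      exists_finite_witnesses hclopen.2 hne hname x L
    -- the new interval `U'` around `x` avoids `F`, and avoids `q n` unless `q n = x`
    have hWopen : IsOpen (U ∩ (F ∪ ({q n} \ {x}))ᶜ) :=
      hU.inter (hFfin.union ((Set.finite_singleton _).subset Set.sdiff_subset)).isClosed.isOpen_compl
    obtain ⟨u, hxu, huW⟩ := exists_ratBasis_subset he hWopen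
      (x := x) ⟨hxU, by rintro (h | h); exacts [hxF h, h.2 rfl]⟩
    have hxu' : u ∈ {n | x ∈ ratBasis e n} := hxu
    rw [show {n | x ∈ ratBasis e n} = {n | ∃ k, h p k = n + 1} from hx] at hxu'
    obtain ⟨k, hk⟩ := hxu'
    obtain ⟨L₁, hL₁⟩ := exists_prefix_of_continuousOn hcont hpD k
    obtain ⟨j, hj⟩ : ∃ j, (ratBasis e n ∩ A).Nonempty → p j = n + 1 := by
      by_cases hn : (ratBasis e n ∩ A).Nonempty
      · have hn' : n ∈ {n | (ratBasis e n ∩ A).Nonempty} := hn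
        rw [show {n | (ratBasis e n ∩ A).Nonempty} = {n | ∃ k, p k = n + 1} from hname] at hn'
        obtain ⟨j, hj⟩ := hn'
        exact ⟨j, fun _ => hj⟩
      · exact ⟨0, fun h => (hn h).elim⟩
    obtain ⟨L', hLL', hL₁L', hjL'⟩ : ∃ L', L < L' ∧ L₁ ≤ L' ∧ j < L' :=
      ⟨L + L₁ + j + 1, by omega, by omega, by omega⟩
    -- the removed neighbourhood `V` keeps the promises of the longer prefix
    obtain ⟨G, hGfin, hGA, hxG, -, hGw⟩ :=
      exists_finite_witnesses hclopen.2 hne hname x L'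
    obtain ⟨V, hVclopen, hxV, hVsub⟩ := exists_clopen_rat
      ((isOpen_ratBasis e u).inter hGfin.isClosed.isOpen_compl) (x := x) ⟨hxu, hxG⟩
    obtain ⟨p', hp'p, hp'⟩ := exists_enumerates_extending
      {m | (ratBasis e m ∩ (A \ V)).Nonempty} p L' (by
        intro i hi m hm
        obtain ⟨b, hb, hbG⟩ := hGw i hi m hm
        exact ⟨b, hb, hGA hbG, fun hbV => (hVsub hbV).2 hbG⟩)
    have hFU : ∀ b ∈ F, b ∈ A \ ratBasis e u :=
      fun b hb => ⟨hFA hb, fun hbu => (huW hbu).2 (Or.inl hb)⟩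
    obtain ⟨c, hcF⟩ := hFne
    refine ⟨⟨A \ V, p', L', ratBasis e u⟩,
      ⟨⟨c, hFA hcF, fun hcV => (hFU c hcF).2 (hVsub hcV).1⟩, hclopen.diff hVclopen, hp', ?_, ?_,
        isOpen_ratBasis e u, ?_⟩, hLL', hp'p, Set.sdiff_subset, ?_, ?_, ⟨c, hFU c hcF⟩, ?_, ?_, ?_⟩
    · intro i hi
      exact (hp'p i (by omega)).trans (hpre i hi)
    · exact hL.trans hLL'.le
    · intro r hrD hagree y hy
      have hk' : h r k = u + 1 := by
        rw [hL₁ r hrD (fun i hi => ?_), hk]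
        have hi' : i < L' := by omega
        exact (hagree i hi').trans (hp'p i hi')
      have : u ∈ {n | ∃ k, h r k = n + 1} := ⟨k, hk'⟩
      rwa [← show {n | y ∈ ratBasis e n} = {n | ∃ k, h r k = n + 1} from hy] at this
    · exact fun y hy => ⟨hy.1, fun hyV => hy.2 (hVsub hyV).1⟩
    · exact fun y hy => (huW hy).1
    · intro i hi m hm
      obtain ⟨b, hb, hbF⟩ := hFw i hi m hm
      exact ⟨b, hb, hFU b hbF⟩
    · exact fun hn => ⟨j, hjL', hj hn⟩
    · intro hqu hqA
      by_cases hqx : q n = x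
      · exact hqA.2 (hqx ▸ hxV)
      · exact (huW hqu).2 (Or.inr ⟨rfl, hqx⟩)
  have h₀ : Inv ⟨Set.univ, p₀, L₀, Set.univ⟩ :=
    ⟨Set.univ_nonempty, isClopen_univ, hp₀, fun _ _ => rfl, le_rfl, isOpen_univ,
      fun _ _ _ _ _ => Set.mem_univ _⟩
  obtain ⟨f, hInv, hR⟩ := exists_seq_of_step Inv R _ h₀ step
  obtain ⟨p, hp⟩ := exists_limit (fun n => (f n).p) (fun n => (f (n + 1)).L)
    (fun n => (hR (n + 1)).1) (fun n => (hR n).2.1)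
  have hAanti : Antitone fun n => (f n).A := antitone_nat_of_succ_le fun n => (hR n).2.2.1
  have hUanti : Antitone fun n => (f n).U := antitone_nat_of_succ_le fun n => (hR n).2.2.2.2.1
  have hLge : ∀ n, n ≤ (f n).L := by
    intro n
    induction n with
    | zero => exact Nat.zero_le _
    | succ n ih => exact lt_of_le_of_lt ih (hR n).1
  -- outside `U (n + 1)` nothing is removed from `A n` any more
  have persist : ∀ n, (f n).A \ (f (n + 1)).U ⊆ ⋂ m, (f m).A := by
    intro n y hy
    have hge : ∀ m, n ≤ m → y ∈ (f m).A := by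
      intro m hm
      induction m, hm using Nat.le_induction with
      | base => exact hy.1
      | succ m hm ih =>
        exact (hR m).2.2.2.1 ⟨ih, fun hyU => hy.2 (hUanti (Nat.succ_le_succ hm) hyU)⟩
    refine Set.mem_iInter.2 fun m => ?_
    rcases le_total n m with hm | hm
    · exact hge m hm
    · exact hAanti hm hy.1
  have hne : (⋂ m, (f m).A).Nonempty := (hR 0).2.2.2.2.2.1.mono (persist 0)
  have hclosed : IsClosed (⋂ m, (f m).A) := isClosed_iInter fun m => (hInv m).2.1.1
  have hname : ClosedName (ratBasis e) (⋂ m, (f m).A) p := by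
    unfold ClosedName Enumerates
    ext m
    constructor
    · rintro ⟨y, hym, hyA⟩
      obtain ⟨i, hi, him⟩ := (hR m).2.2.2.2.2.2.2.1 ⟨y, hym, Set.mem_iInter.1 hyA m⟩
      exact ⟨i, (hp m i hi).trans him⟩
    · rintro ⟨i, hi⟩
      have hiL : i < (f (i + 1)).L := hLge (i + 1)
      have hpi : (f (i + 1)).p i = m + 1 := by
        rw [← hi, hp (i + 1) i (hiL.trans (hR (i + 1)).1)]
      obtain ⟨y, hym, hy⟩ := (hR (i + 1)).2.2.2.2.2.2.1 i hiL m hpi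
      exact ⟨y, hym, persist (i + 1) hy⟩
  have hpre : ∀ i < L₀, p i = p₀ i := by
    intro i hi
    rw [hp 0 i (lt_of_lt_of_le hi (hInv 1).2.2.2.2.1)]
    exact (hInv 0).2.2.2.1 i hi
  obtain ⟨z, hzA, hz⟩ := hsol p _ hne hclosed hname hpre
  obtain ⟨n, rfl⟩ := hq z
  have hzU : q n ∈ (f (n + 1)).U := by
    refine (hInv (n + 1)).2.2.2.2.2.2 p ⟨⟨_, hne, hclosed, hname⟩, hpre⟩ (fun i hi => ?_) _ hz
    exact hp (n + 1) i (hi.trans (hR (n + 1)).1)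
  exact (hR n).2.2.2.2.2.2.2.2 hzU (Set.mem_iInter.1 hzA (n + 1))

/-! ### Elimination of `C_ℕ` -/

/-- If `K` continuously maps names of instances of overt choice to names of instances `S p` of
`C_ℕ`, then on some cylinder around a name of `ℚ` a single `n` belongs to all `S p`. -/
lemma exists_uniform_index (e : ℕ → ℚ × ℚ) (K : (ℕ → ℕ) → (ℕ → ℕ)) (S : (ℕ → ℕ) → Set ℕ)
    (hK : ContinuousOn K {p | ValidName e p})
    (hS : ∀ p, ValidName e p → (S p).Nonempty ∧ Enumerates (K p) (S p)ᶜ) :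
    ∃ p₀ L₀ n, ClosedName (ratBasis e) Set.univ p₀ ∧
      ∀ p, ValidName e p → (∀ i < L₀, p i = p₀ i) → n ∈ S p := by
  by_contra! hcon
  let N : Set ℕ := {m | (ratBasis e m ∩ Set.univ).Nonempty}
  have hvalid : ∀ p, Enumerates p N → ValidName e p :=
    fun p hp => ⟨Set.univ, Set.univ_nonempty, isClosed_univ, hp⟩
  let Inv : (ℕ → ℕ) × ℕ → Prop := fun s => Enumerates s.1 N
  let R : ℕ → (ℕ → ℕ) × ℕ → (ℕ → ℕ) × ℕ → Prop := fun n s t =>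
    s.2 < t.2 ∧ (∀ i < s.2, t.1 i = s.1 i) ∧
      (∀ p, ValidName e p → (∀ i < t.2, p i = t.1 i) → n ∉ S p) ∧
      (n ∈ N → ∃ i < t.2, t.1 i = n + 1)
  have step : ∀ n s, Inv s → ∃ t, Inv t ∧ R n s t := by
    rintro n ⟨p, L⟩ hp
    obtain ⟨p₁, hp₁, hp₁p, hn⟩ := hcon p L n hp
    have hn' : n ∈ (S p₁)ᶜ := hn
    rw [show (S p₁)ᶜ = {n | ∃ k, K p₁ k = n + 1} from (hS p₁ hp₁).2] at hn'
    obtain ⟨k, hk⟩ := hn'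
    obtain ⟨L₁, hL₁⟩ := exists_prefix_of_continuousOn hK hp₁ k
    -- any prefix of a valid name is a prefix of a name of `ℚ`
    obtain ⟨p₂, hp₂p₁, hp₂⟩ := exists_enumerates_extending N p₁ (L + L₁) (by
      intro i _ m hm
      obtain ⟨A, -, -, hA⟩ := hp₁
      have hm' : m ∈ {n | ∃ k, p₁ k = n + 1} := ⟨i, hm⟩
      rw [← show {n | (ratBasis e n ∩ A).Nonempty} = {n | ∃ k, p₁ k = n + 1} from hA] at hm'
      exact Set.Nonempty.mono (Set.inter_subset_inter_right _ (Set.subset_univ A)) hm')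
    obtain ⟨j, hj⟩ : ∃ j, n ∈ N → p₂ j = n + 1 := by
      by_cases hnN : n ∈ N
      · have hn' := hnN
        rw [show N = {n | ∃ k, p₂ k = n + 1} from hp₂] at hn'
        obtain ⟨j, hj⟩ := hn'
        exact ⟨j, fun _ => hj⟩
      · exact ⟨0, fun h => (hnN h).elim⟩
    refine ⟨(p₂, L + L₁ + j + 1), hp₂, ?_, ?_, ?_, fun h => ⟨j, ?_, hj h⟩⟩
    · change L < L + L₁ + j + 1
      omega
    · intro i hi
      change i < L at hi
      exact (hp₂p₁ i (by omega)).trans (hp₁p i hi)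
    · intro p' hp' hagree hnS
      have hk' : K p' k = n + 1 := by
        rw [hL₁ p' hp' (fun i hi => ?_), hk]
        rw [hagree i (show i < L + L₁ + j + 1 by omega)]
        exact hp₂p₁ i (by omega)
      have hmem : n ∈ {n | ∃ k, K p' k = n + 1} := ⟨k, hk'⟩
      rw [← show (S p')ᶜ = {n | ∃ k, K p' k = n + 1} from (hS p' hp').2] at hmem
      exact hmem hnS
    · change j < L + L₁ + j + 1
      omega
  obtain ⟨p₀, -, hp₀⟩ := exists_enumerates_extending N (fun _ => 0) 0 (by simp)
  obtain ⟨f, hInv, hR⟩ := exists_seq_of_step Inv R (p₀, 0) hp₀ step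
  obtain ⟨p, hp⟩ := exists_limit (fun n => (f n).1) (fun n => (f n).2)
    (fun n => (hR n).1) (fun n => (hR n).2.1)
  have hLge : ∀ n, n ≤ (f n).2 := by
    intro n
    induction n with
    | zero => exact Nat.zero_le _
    | succ n ih => exact lt_of_le_of_lt ih (hR n).1
  have hname : Enumerates p N := by
    unfold Enumerates
    ext m
    constructor
    · intro hm
      obtain ⟨i, hi, him⟩ := (hR m).2.2.2 hm
      exact ⟨i, (hp (m + 1) i hi).trans him⟩
    · rintro ⟨i, hi⟩
      rw [show N = {n | ∃ k, (f (i + 1)).1 k = n + 1} from hInv (i + 1)]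
      exact ⟨i, by rw [← hi, hp (i + 1) i (hLge (i + 1))]⟩
  obtain ⟨n, hn⟩ := (hS p (hvalid p hname)).1
  exact (hR n).2.2.1 p (hvalid p hname) (hp (n + 1)) hn

/-- Overt choice for ℚ and `C_ℕ` are topologically Weihrauch incomparable. -/
theorem overt_choice_rat_incomparable_CNat (e : ℕ → ℚ × ℚ) (he : Function.Surjective e) :
    -- (1) overt choice for ℚ is not reducible to C_ℕ
    (¬ ∃ (K : (ℕ → ℕ) → (ℕ → ℕ)) (S : (ℕ → ℕ) → Set ℕ) (H : (ℕ → ℕ) × ℕ → (ℕ → ℕ)),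
      ContinuousOn K {p | ∃ A : Set ℚ, A.Nonempty ∧ IsClosed A ∧
        ClosedName (ratBasis e) A p} ∧
      ContinuousOn H {q : (ℕ → ℕ) × ℕ |
        (∃ A : Set ℚ, A.Nonempty ∧ IsClosed A ∧ ClosedName (ratBasis e) A q.1) ∧
        q.2 ∈ S q.1} ∧
      ∀ (p : ℕ → ℕ) (A : Set ℚ), A.Nonempty → IsClosed A → ClosedName (ratBasis e) A p →
        (S p).Nonempty ∧ Enumerates (K p) (S p)ᶜ ∧
          ∀ n ∈ S p, ∃ x ∈ A, PointName (ratBasis e) x (H (p, n))) ∧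
    -- (2) C_ℕ is not reducible to overt choice for ℚ
    (¬ ∃ (K' : (ℕ → ℕ) → (ℕ → ℕ)) (Aset : (ℕ → ℕ) → Set ℚ)
        (H' : (ℕ → ℕ) × (ℕ → ℕ) → ℕ),
      ContinuousOn K' {p | ∃ S : Set ℕ, S.Nonempty ∧ Enumerates p Sᶜ} ∧
      ContinuousOn H' {pq : (ℕ → ℕ) × (ℕ → ℕ) |
        (∃ S : Set ℕ, S.Nonempty ∧ Enumerates pq.1 Sᶜ) ∧
        ∃ x ∈ Aset pq.1, PointName (ratBasis e) x pq.2} ∧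
      ∀ (p : ℕ → ℕ) (S : Set ℕ), S.Nonempty → Enumerates p Sᶜ →
        (Aset p).Nonempty ∧ IsClosed (Aset p) ∧ ClosedName (ratBasis e) (Aset p) (K' p) ∧
          ∀ (q : ℕ → ℕ) (x : ℚ), x ∈ Aset p → PointName (ratBasis e) x q →
            H' (p, q) ∈ S) := by
  constructor
  · rintro ⟨K, S, H, hK, hH, hred⟩
    obtain ⟨p₀, L₀, n, hp₀, hn⟩ := exists_uniform_index e K S hK (by
      rintro p ⟨A, hne, hcl, hA⟩
      exact ⟨(hred p A hne hcl hA).1, (hred p A hne hcl hA).2.1⟩)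
    refine no_local_continuous_choice he p₀ L₀ hp₀ (fun p => H (p, n)) ?_ ?_
    · exact hH.comp (by fun_prop) (fun p hp => ⟨hp.1, hn p hp.1 hp.2⟩)
    · intro p A hne hcl hA hpre
      exact (hred p A hne hcl hA).2.2 n (hn p ⟨A, hne, hcl, hA⟩ hpre)
  · rintro ⟨K, Aset, H, hK, hH, hred⟩
    have hp : Enumerates (fun _ => 0) (Set.univ : Set ℕ)ᶜ := by
      simp [Enumerates]
    obtain ⟨⟨x, hxA⟩, -, hKname, -⟩ := hred _ _ Set.univ_nonempty hp
    obtain ⟨q, -, hq⟩ := exists_enumerates_extending {m | x ∈ ratBasis e m} (fun _ => 0) 0 (by simp)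
    -- `H` is locally constant at the pair of names
    have hloc := (hH (fun _ => 0, q) ⟨⟨_, Set.univ_nonempty, hp⟩, x, hxA, hq⟩)
      ((isOpen_discrete {H (fun _ => 0, q)}).mem_nhds rfl)
    rw [Filter.mem_map, mem_nhdsWithin_iff_exists_mem_nhds_inter] at hloc
    obtain ⟨w, hw, hwsub⟩ := hloc
    obtain ⟨w₁, hw₁, w₂, hw₂, hw₁₂⟩ := mem_nhds_prod_iff.1 hw
    obtain ⟨L₁, hL₁⟩ := exists_prefix_of_mem_nhds hw₁
    obtain ⟨L₂, hL₂⟩ := exists_prefix_of_mem_nhds hw₂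
    -- the first `L₂` entries of `q` only say that `x` lies in the open set `W`
    let W : Set ℚ := ⋂ i ∈ Set.Iio L₂, ⋂ m ∈ {m | q i = m + 1}, ratBasis e m
    have hWopen : IsOpen W := by
      refine (Set.finite_Iio L₂).isOpen_biInter fun i _ => Set.Finite.isOpen_biInter ?_
        fun m _ => isOpen_ratBasis e m
      exact (Set.finite_singleton (q i - 1)).subset fun m (hm : q i = m + 1) => by simp [hm]
    have hxW : x ∈ W := by
      refine Set.mem_iInter₂.2 fun i _ => Set.mem_iInter₂.2 fun m hm => ?_
      have : m ∈ {m | ∃ k, q k = m + 1} := ⟨i, hm⟩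
      rwa [← show {m | x ∈ ratBasis e m} = {m | ∃ k, q k = m + 1} from hq] at this
    obtain ⟨u, hxu, huW⟩ := exists_ratBasis_subset he hWopen hxW
    have hu : u ∈ {n | (ratBasis e n ∩ Aset (fun _ => 0)).Nonempty} := ⟨x, hxu, hxA⟩
    rw [show {n | (ratBasis e n ∩ Aset (fun _ => 0)).Nonempty}
      = {n | ∃ k, K (fun _ => 0) k = n + 1} from hKname] at hu
    obtain ⟨k, hk⟩ := hu
    obtain ⟨L₃, hL₃⟩ := exists_prefix_of_continuousOn hK ⟨_, Set.univ_nonempty, hp⟩ k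
    obtain ⟨n, hn⟩ : ∃ n, n = H (fun _ => 0, q) := ⟨_, rfl⟩
    -- the instance with `n` removed, sharing a long prefix with the zero sequence
    obtain ⟨p', hzero, hp'⟩ := exists_enumerates_extending {n} (fun _ => 0) (L₁ + L₃) (by simp)
    have hp'S : Enumerates p' (({n}ᶜ : Set ℕ))ᶜ := by rwa [compl_compl]
    have hSne : ({n}ᶜ : Set ℕ).Nonempty := ⟨n + 1, by simp⟩
    obtain ⟨-, -, hKname', hsol⟩ := hred p' _ hSne hp'S
    have hu' : u ∈ {n | ∃ k, K p' k = n + 1} :=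
      ⟨k, by rw [hL₃ p' ⟨_, hSne, hp'S⟩ (fun i hi => hzero i (by omega)), hk]⟩
    rw [← show {n | (ratBasis e n ∩ Aset p').Nonempty} = {n | ∃ k, K p' k = n + 1} from hKname']
      at hu'
    obtain ⟨x', hx'u, hx'A⟩ := hu'
    obtain ⟨q', hq'q, hq'⟩ := exists_enumerates_extending {m | x' ∈ ratBasis e m} q L₂
      fun i hi m hm => Set.mem_iInter₂.1 (Set.mem_iInter₂.1 (huW hx'u) i hi) m hm
    have hHn : H (p', q') = H (fun _ => 0, q) :=
      hwsub ⟨hw₁₂ ⟨hL₁ p' fun i hi => hzero i (by omega), hL₂ q' hq'q⟩,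
        ⟨_, hSne, hp'S⟩, x', hx'A, hq'⟩
    exact hsol q' x' hx'A hq' (hHn.trans hn.symm)
end

section
/- Overt choice for S₀ is not continuous: there is no continuous function F, defined on the subspace of Baire space of all names of nonempty closed subsets of S₀, such that F p is a name of some point of A whenever p is a name of the nonempty closed set A ⊆ S₀. -/
/-- The space `S₀`: finite sequences of naturals. -/
structure S0 where
  val : List ℕ

/-- The topology of `S₀` is generated by the sets `{u | w is not a prefix of u}`. -/
instance : TopologicalSpace S0 :=
  TopologicalSpace.generateFrom {V | ∃ w : List ℕ, V = {u : S0 | ¬ w <+: u.val}}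

/-- The basic open set of `S₀` determined by a finite set `F` of words:
all points having no prefix in `F`. -/
def NF (F : Finset (List ℕ)) : Set S0 := {u | ∀ w ∈ F, ¬ w <+: u.val}

/-- A name of a point `u ∈ S₀` enumerates the codes of the finite sets `F` with `u ∈ N_F`. -/
def S0PointName (encF : Finset (List ℕ) → ℕ) (u : S0) (p : ℕ → ℕ) : Prop :=
  Enumerates p {n | ∃ F : Finset (List ℕ), encF F = n ∧ u ∈ NF F}

/-- A name of a closed set `A ⊆ S₀` enumerates the codes of the finite sets `F` with
`N_F ∩ A ≠ ∅`. -/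
def S0ClosedName (encF : Finset (List ℕ) → ℕ) (A : Set S0) (p : ℕ → ℕ) : Prop :=
  Enumerates p {n | ∃ F : Finset (List ℕ), encF F = n ∧ (NF F ∩ A).Nonempty}

/-- The union of the cone of all extensions of `x` with the cones of the words in `Y`. -/
def region (x : List ℕ) (Y : Finset (List ℕ)) : Set S0 :=
  {u | x <+: u.val ∨ ∃ y ∈ Y, y <+: u.val}

/-- The set of names of nonempty closed subsets of `S₀`. -/
def closedNames (encF : Finset (List ℕ) → ℕ) : Set (ℕ → ℕ) :=
  {p | ∃ A : Set S0, A.Nonempty ∧ IsClosed A ∧ S0ClosedName encF A p}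

/-- A stage of the construction: the current region is `region x Y`, and the part of the name
fixed so far is the restriction of `p` to `{0, …, N - 1}`. -/
structure Stage_s11 where
  x : List ℕ
  Y : Finset (List ℕ)
  p : ℕ → ℕ
  N : ℕ

/-- The invariant of the construction: every basic set listed so far meets the cone of some
`y ∈ Y` or contains the whole cone of `x`, and on every name extending the part fixed so far, `F`
discloses that no `y ∈ Y` is a prefix of its answer. -/
def Stage_s11.Good (encF : Finset (List ℕ) → ℕ) (F : (ℕ → ℕ) → (ℕ → ℕ)) (s : Stage_s11) : Prop :=
  (∀ i < s.N, ∀ c, s.p i = c + 1 → ∃ G, encF G = c ∧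
    ((∃ u ∈ NF G, ∃ y ∈ s.Y, y <+: u.val) ∨ ∀ u : S0, s.x <+: u.val → u ∈ NF G)) ∧
  ∀ y ∈ s.Y, ∀ q ∈ closedNames encF, (∀ i < s.N, q i = s.p i) → ∃ k, F q k = encF {y} + 1

/-- `t` is a next stage after `s`. The last clause makes the limit list every basic set that meets
all the regions. -/
def Stage_s11.Next (encF : Finset (List ℕ) → ℕ) (s t : Stage_s11) : Prop :=
  (∀ i < s.N, t.p i = s.p i) ∧ s.N < t.N ∧ (∃ k, t.x = s.x ++ [k]) ∧
  (∃ y, s.x <+: y ∧ t.Y = insert y s.Y) ∧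
  ∀ G, encF G ≤ s.N → (NF G ∩ region s.x s.Y).Nonempty → ∃ i < t.N, t.p i = encF G + 1

theorem isClosed_cone (w : List ℕ) : IsClosed {u : S0 | w <+: u.val} := by
  rw [← isOpen_compl_iff]
  exact TopologicalSpace.isOpen_generateFrom_of_mem ⟨w, rfl⟩

theorem isClosed_region (x : List ℕ) (Y : Finset (List ℕ)) : IsClosed (region x Y) := by
  have h : region x Y = {u | x <+: u.val} ∪ ⋃ y ∈ Y, {u : S0 | y <+: u.val} := by
    ext u; simp [region]
  rw [h]
  exact (isClosed_cone x).union (Y.finite_toSet.isClosed_biUnion fun y _ => isClosed_cone y)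

theorem region_nonempty (x : List ℕ) (Y : Finset (List ℕ)) : (region x Y).Nonempty :=
  ⟨⟨x⟩, Or.inl List.prefix_rfl⟩

/-- A value of `F` at a name depends on a finite part of that name, which may be taken as long as
desired. -/
theorem exists_modulus {F : (ℕ → ℕ) → (ℕ → ℕ)} {D : Set (ℕ → ℕ)} (hF : ContinuousOn F D)
    {p : ℕ → ℕ} (hp : p ∈ D) (k M : ℕ) :
    ∃ N, M ≤ N ∧ ∀ q ∈ D, (∀ i < N, q i = p i) → F q k = F p k := by
  have h1 : Filter.Tendsto (fun q => F q k) (nhdsWithin p D) (nhds (F p k)) :=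
    ((continuous_apply k).continuousAt.tendsto).comp (hF p hp)
  have h2 := h1 ((isOpen_discrete {F p k}).mem_nhds rfl)
  obtain ⟨U, hU, hpU, hUD⟩ := mem_nhdsWithin.1 h2
  obtain ⟨I, v, hv, hvU⟩ := isOpen_pi_iff.1 hU p hpU
  refine ⟨max M (I.sup id + 1), le_max_left _ _, fun q hq hqp => ?_⟩
  refine hUD ⟨hvU fun i hi => ?_, hq⟩
  have hi' : i ≤ I.sup id := Finset.le_sup (f := id) hi
  rw [hqp i (lt_of_lt_of_le (Nat.lt_succ_of_le hi') (le_max_right _ _))]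
  exact (hv i hi).2

/-- Finitely many words contain only finitely many letters. -/
theorem exists_fresh (L : Finset (List ℕ)) : ∃ k, ∀ g ∈ L, k ∉ g := by
  obtain ⟨k, hk⟩ := Infinite.exists_notMem_finset (L.biUnion List.toFinset)
  simp only [Finset.mem_biUnion, List.mem_toFinset, not_exists, not_and] at hk
  exact ⟨k, hk⟩

theorem exists_child (x u : List ℕ) : ∃ j, ¬ x ++ [j] <+: u := by
  obtain ⟨k, hk⟩ := exists_fresh {u}
  refine ⟨k, fun h => hk u (by simp) (h.subset (by simp))⟩

/-- If the basic set of `G` meets the cone of `x`, then it contains the cone of `x ++ [k]` for any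
letter `k` not occurring in `G`. -/
theorem cone_subset_NF {G : Finset (List ℕ)} {x : List ℕ} {k : ℕ} (hk : ∀ g ∈ G, k ∉ g)
    {v : S0} (hv : v ∈ NF G) (hxv : x <+: v.val) (u : S0) (hu : x ++ [k] <+: u.val) :
    u ∈ NF G := by
  intro g hg hgu
  by_cases hl : g.length ≤ x.length
  · exact hv g hg ((List.prefix_of_prefix_length_le hgu
      ((List.prefix_append x [k]).trans hu) hl).trans hxv)
  · have h : x ++ [k] <+: g := List.prefix_of_prefix_length_le hu hgu (by simp; omega)
    exact hk g hg (h.subset (by simp))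

theorem exists_next (encF : Finset (List ℕ) → ℕ) (hencF : Function.Injective encF)
    (F : (ℕ → ℕ) → (ℕ → ℕ)) (hF : ContinuousOn F (closedNames encF))
    (hC : ∀ (p : ℕ → ℕ) (A : Set S0), A.Nonempty → IsClosed A → S0ClosedName encF A p →
        ∃ u ∈ A, S0PointName encF u (F p))
    (s : Stage_s11) (hs : s.Good encF F) : ∃ t : Stage_s11, t.Good encF F ∧ s.Next encF t := by
  classical
  obtain ⟨x, Y, p, N⟩ := s
  obtain ⟨hs1, hs2⟩ := hs
  dsimp only at hs1 hs2
  -- After the first `N` values, `q` lists the code `m` of a set meeting the region at `N + m`.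
  let V : ℕ → Prop := fun c => ∃ G, encF G = c ∧ (NF G ∩ region x Y).Nonempty
  let q : ℕ → ℕ := fun i => if i < N then p i else if V (i - N) then i - N + 1 else 0
  have hq1 : ∀ i < N, q i = p i := fun i hi => by simp [q, hi]
  have hq2 : ∀ c, V c → q (N + c) = c + 1 := fun c hc => by simp [q, hc]
  have hqV : ∀ i c, q i = c + 1 → V c := by
    intro i c hi
    by_cases hiN : i < N
    · rw [hq1 i hiN] at hi
      obtain ⟨G, hG, h⟩ := hs1 i hiN c hi
      refine ⟨G, hG, ?_⟩
      rcases h with ⟨u, hu, hy⟩ | h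
      · exact ⟨u, hu, Or.inr hy⟩
      · exact ⟨⟨x⟩, h ⟨x⟩ List.prefix_rfl, Or.inl List.prefix_rfl⟩
    · by_cases hv : V (i - N)
      · simp only [q, hiN, hv, if_true, if_false] at hi
        have : i - N = c := by omega
        rwa [this] at hv
      · simp [q, hiN, hv] at hi
  have hqn : S0ClosedName encF (region x Y) q := by
    ext c
    exact ⟨fun hc => ⟨N + c, hq2 c hc⟩, fun ⟨i, hi⟩ => hqV i c hi⟩
  have hqD : q ∈ closedNames encF := ⟨_, region_nonempty x Y, isClosed_region x Y, hqn⟩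
  obtain ⟨u, huA, hu⟩ := hC q _ (region_nonempty x Y) (isClosed_region x Y) hqn
  obtain ⟨j, hj⟩ := exists_child x u.val
  have hmem : encF {x ++ [j]} ∈ {n | ∃ F : Finset (List ℕ), encF F = n ∧ u ∈ NF F} :=
    ⟨_, rfl, by simpa [NF] using hj⟩
  rw [show _ = _ from hu] at hmem
  obtain ⟨k, hk⟩ := hmem
  obtain ⟨M, hM, hmod⟩ := exists_modulus hF hqD k (2 * N + 1)
  -- All words in sets whose codes are listed among the first `M` values of `q`.
  let L : Finset (List ℕ) := (Finset.range M).biUnion fun i =>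
    if h : ∃ G, encF G + 1 = q i then h.choose else ∅
  have hL : ∀ i < M, ∀ G, encF G + 1 = q i → G ⊆ L := by
    intro i hi G hG g hg
    have h : ∃ G, encF G + 1 = q i := ⟨G, hG⟩
    have hc : h.choose = G := hencF (by have := h.choose_spec; omega)
    refine Finset.mem_biUnion.2 ⟨i, Finset.mem_range.2 hi, ?_⟩
    rw [dif_pos h, hc]
    exact hg
  obtain ⟨l, hl⟩ := exists_fresh L
  refine ⟨⟨x ++ [l], insert (x ++ [j]) Y, q, M⟩, ⟨?_, ?_⟩, ?_⟩
  · intro i hi c hc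
    dsimp only at hi hc ⊢
    obtain ⟨G, hG, v, hv, hvr⟩ := hqV i c hc
    refine ⟨G, hG, ?_⟩
    rcases hvr with hvx | ⟨y, hy, hyv⟩
    · exact Or.inr (cone_subset_NF
        (fun g hg => hl g (hL i hi G (by rw [hG, hc]) hg)) hv hvx)
    · exact Or.inl ⟨v, hv, y, Finset.mem_insert_of_mem hy, hyv⟩
  · intro y hy r hr hrq
    dsimp only at hy hrq
    rcases Finset.mem_insert.1 hy with rfl | hy
    · exact ⟨k, by rw [hmod r hr hrq, hk]⟩
    · exact hs2 y hy r hr fun i hi => by rw [hrq i (by omega), hq1 i hi]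
  · refine ⟨hq1, by dsimp only; omega, ⟨l, rfl⟩, ⟨_, List.prefix_append _ _, rfl⟩, ?_⟩
    intro G hG hGr
    dsimp only at hG hGr ⊢
    exact ⟨N + encF G, by omega, hq2 _ ⟨G, rfl, hGr⟩⟩

/-- Overt choice for `S₀` is not continuous. -/
theorem overt_choice_S0_not_continuous
    (encF : Finset (List ℕ) → ℕ) (hencF : Function.Injective encF) :
    ¬ ∃ F : (ℕ → ℕ) → (ℕ → ℕ),
      ContinuousOn F {p | ∃ A : Set S0, A.Nonempty ∧ IsClosed A ∧ S0ClosedName encF A p} ∧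
      ∀ (p : ℕ → ℕ) (A : Set S0), A.Nonempty → IsClosed A → S0ClosedName encF A p →
        ∃ u ∈ A, S0PointName encF u (F p) := by
  rintro ⟨F, hF, hC⟩
  choose f hfG hfN using exists_next encF hencF F hF hC
  obtain ⟨s, hG, hN⟩ : ∃ s : ℕ → Stage_s11,
      (∀ n, (s n).Good encF F) ∧ ∀ n, (s n).Next encF (s (n + 1)) := by
    let S : ℕ → {s : Stage_s11 // s.Good encF F} := fun n =>
      Nat.rec ⟨⟨[], ∅, 0, 0⟩, by simp [Stage_s11.Good]⟩ (fun _ s => ⟨f s.1 s.2, hfG s.1 s.2⟩) n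
    exact ⟨fun n => (S n).1, fun n => (S n).2, fun n => hfN (S n).1 (S n).2⟩
  have hlen : ∀ n, n ≤ (s n).x.length := by
    intro n
    induction n with
    | zero => simp
    | succ n ih =>
      obtain ⟨k, hk⟩ := (hN n).2.2.1
      rw [hk]; simpa using ih
  have hNmono : StrictMono fun n => (s n).N := strictMono_nat_of_lt_succ fun n => (hN n).2.1
  have hNn : ∀ n, n ≤ (s n).N := fun n => hNmono.le_apply
  have hpmono : ∀ m n, m ≤ n → ∀ i < (s m).N, (s n).p i = (s m).p i := by
    intro m n hmn
    induction n, hmn using Nat.le_induction with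
    | base => intros; rfl
    | succ n hmn ih =>
      intro i hi
      rw [(hN n).1 i (lt_of_lt_of_le hi (hNmono.monotone hmn)), ih i hi]
  have hYmono : Monotone fun n => (s n).Y := monotone_nat_of_le_succ fun n => by
    obtain ⟨y, -, hy⟩ := (hN n).2.2.2.1
    rw [hy]; exact Finset.subset_insert _ _
  have hRanti : Antitone fun n => region (s n).x (s n).Y := antitone_nat_of_succ_le fun n => by
    obtain ⟨k, hk⟩ := (hN n).2.2.1
    obtain ⟨y, hxy, hy⟩ := (hN n).2.2.2.1
    rintro u (hu | ⟨z, hz, hzu⟩)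
    · rw [hk] at hu
      exact Or.inl ((List.prefix_append _ _).trans hu)
    · rw [hy] at hz
      rcases Finset.mem_insert.1 hz with rfl | hz
      · exact Or.inl (hxy.trans hzu)
      · exact Or.inr ⟨z, hz, hzu⟩
  let A : Set S0 := ⋂ n, region (s n).x (s n).Y
  have hA : ∀ u : S0, u ∈ A ↔ ∃ n, ∃ y ∈ (s n).Y, y <+: u.val := by
    intro u
    constructor
    · intro hu
      -- A word of length at least `u.val.length + 1` is not a prefix of `u`.
      rcases Set.mem_iInter.1 hu (u.val.length + 1) with h | h
      · have h1 := h.length_le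
        have h2 := hlen (u.val.length + 1)
        omega
      · exact ⟨_, h⟩
    · rintro ⟨n, y, hy, hyu⟩
      refine Set.mem_iInter.2 fun m => ?_
      exact hRanti (le_max_left m n) (Or.inr ⟨y, hYmono (le_max_right m n) hy, hyu⟩)
  let p : ℕ → ℕ := fun i => (s (i + 1)).p i
  have hp : ∀ n, ∀ i < (s n).N, p i = (s n).p i := by
    intro n i hi
    rcases le_total n (i + 1) with h | h
    · exact hpmono _ _ h i hi
    · exact (hpmono _ _ h i (hNn (i + 1))).symm
  have hAne : A.Nonempty := by
    obtain ⟨y, -, hy⟩ := (hN 0).2.2.2.1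
    exact ⟨⟨y⟩, (hA _).2 ⟨0 + 1, y, by rw [hy]; exact Finset.mem_insert_self _ _, List.prefix_rfl⟩⟩
  have hAc : IsClosed A := isClosed_iInter fun n => isClosed_region _ _
  have hpA : S0ClosedName encF A p := by
    ext c
    constructor
    · rintro ⟨G, rfl, u, huG, huA⟩
      have h := (hN (encF G)).2.2.2.2 G (hNn _) ⟨u, huG, Set.mem_iInter.1 huA _⟩
      obtain ⟨i, hi, hic⟩ := h
      exact ⟨i, by rw [hp _ i hi, hic]⟩
    · rintro ⟨i, hi⟩
      obtain ⟨G, hGc, h⟩ := (hG (i + 1)).1 i (hNn (i + 1)) c hi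
      refine ⟨G, hGc, ?_⟩
      rcases h with ⟨u, hu, hy⟩ | h
      · exact ⟨u, hu, (hA u).2 ⟨_, hy⟩⟩
      · -- The word that enters `Y` at the following stage extends the current `x`.
        obtain ⟨y, hxy, hy⟩ := (hN (i + 1)).2.2.2.1
        exact ⟨⟨y⟩, h _ hxy,
          (hA _).2 ⟨i + 1 + 1, y, by rw [hy]; exact Finset.mem_insert_self _ _, List.prefix_rfl⟩⟩
  obtain ⟨u, huA, hu⟩ := hC p A hAne hAc hpA
  obtain ⟨n, y, hy, hyu⟩ := (hA u).1 huA
  obtain ⟨k, hk⟩ := (hG n).2 y hy p ⟨A, hAne, hAc, hpA⟩ (hp n)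
  have hmem : encF {y} ∈ {n | ∃ k, F p k = n + 1} := ⟨k, hk⟩
  rw [← show _ = _ from hu] at hmem
  obtain ⟨G, hGy, huG⟩ := hmem
  rw [hencF hGy] at huG
  exact huG y (Finset.mem_singleton_self y) hyu
end
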